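/- arXiv:0907.2728 — 7 statements merged into one kernel-verified Lean document; each statement's English description precedes it below -/
import Mathlib

section
/- Let T be an n×n complex matrix with n distinct eigenvalues λ_1,…,λ_n, let u_i be nonzero eigenvectors of T with T u_i = λ_i u_i, and let v_j be nonzero eigenvectors of Tᴴ with Tᴴ v_j = conj(λ_j) v_j. Then every x ∈ ℂⁿ satisfies the expansion x = Σ_{j=1}^{n} (⟨x, v_j⟩ / ⟨u_j, v_j⟩) · u_j. -/
open Matrix BigOperators

/-- The standard Hermitian inner product on ℂⁿ, linear in the first slot and
conjugate-linear in the second. -/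
noncomputable def hinner {n : ℕ} (x y : Fin n → ℂ) : ℂ :=
  ∑ i, x i * (starRingEnd ℂ) (y i)

/-- A conjugation on ℂⁿ: a conjugate-linear, involutive, isometric map. -/
def IsConjugation {n : ℕ} (C : (Fin n → ℂ) → (Fin n → ℂ)) : Prop :=
  (∀ x y, C (x + y) = C x + C y) ∧
  (∀ (a : ℂ) (x), C (a • x) = (starRingEnd ℂ a) • C x) ∧
  (∀ x, C (C x) = x) ∧
  (∀ x y, hinner (C x) (C y) = hinner y x)

/-- A square complex matrix is UECSM if it is unitarily equivalent to a
complex symmetric matrix. -/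
def UECSM {m : Type*} [Fintype m] [DecidableEq m] (T : Matrix m m ℂ) : Prop :=
  ∃ Q : Matrix m m ℂ, Qᴴ * Q = 1 ∧ Q * Qᴴ = 1 ∧ (Qᴴ * T * Q)ᵀ = Qᴴ * T * Q

/-- Expansion of an arbitrary vector in the eigenbasis `u_1, …, u_n`. -/
theorem expansion_in_u_basis {n : ℕ} (T : Matrix (Fin n) (Fin n) ℂ)
    (lam : Fin n → ℂ) (hlam : Function.Injective lam)
    (u v : Fin n → (Fin n → ℂ))
    (hu0 : ∀ i, u i ≠ 0) (hv0 : ∀ j, v j ≠ 0)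
    (hu : ∀ i, T.mulVec (u i) = lam i • u i)
    (hv : ∀ j, Tᴴ.mulVec (v j) = (starRingEnd ℂ) (lam j) • v j) :
    ∀ x : Fin n → ℂ, x = ∑ j, (hinner x (v j) / hinner (u j) (v j)) • u j := by
  have hdot : ∀ x y : Fin n → ℂ, hinner x y = x ⬝ᵥ star y := fun x y => rfl
  have hadj : ∀ (y : Fin n → ℂ) (j : Fin n),
      (T *ᵥ y) ⬝ᵥ star (v j) = lam j * (y ⬝ᵥ star (v j)) := by
    intro y j
    have h1 : star (v j) ᵥ* T = lam j • star (v j) := by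
      have h := congrArg star (hv j)
      rw [Matrix.star_mulVec, Matrix.conjTranspose_conjTranspose] at h
      rw [h]
      ext i
      simp
    rw [dotProduct_comm, Matrix.dotProduct_mulVec, h1, smul_dotProduct, smul_eq_mul,
      dotProduct_comm]
  have horth : ∀ i j, i ≠ j → u i ⬝ᵥ star (v j) = 0 := by
    intro i j hij
    have h := hadj (u i) j
    rw [hu i, smul_dotProduct, smul_eq_mul] at h
    have h2 : (lam i - lam j) * (u i ⬝ᵥ star (v j)) = 0 := by
      rw [sub_mul, h, sub_self]
    exact (mul_eq_zero.mp h2).resolve_left (sub_ne_zero.mpr fun e => hij (hlam e))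
  have hli : LinearIndependent ℂ u := by
    refine Module.End.eigenvectors_linearIndependent' (Matrix.toLin' T) lam hlam u ?_
    intro i
    rw [Module.End.hasEigenvector_iff, Module.End.mem_eigenspace_iff]
    exact ⟨by rw [Matrix.toLin'_apply]; exact hu i, hu0 i⟩
  have hspan : ∀ x : Fin n → ℂ, ∃ c : Fin n → ℂ, x = ∑ j, c j • u j := by
    intro x
    have htop := hli.span_eq_top_of_card_eq_finrank' (by simp)
    have hx : x ∈ Submodule.span ℂ (Set.range u) := by rw [htop]; trivial
    obtain ⟨c, hc⟩ := (Submodule.mem_span_range_iff_exists_fun ℂ).mp hx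
    exact ⟨c, hc.symm⟩
  have hcoef : ∀ (c : Fin n → ℂ) (k : Fin n),
      (∑ j, c j • u j) ⬝ᵥ star (v k) = c k * (u k ⬝ᵥ star (v k)) := by
    intro c k
    rw [sum_dotProduct, Finset.sum_eq_single k]
    · rw [smul_dotProduct, smul_eq_mul]
    · intro j _ hj
      rw [smul_dotProduct, horth j k hj, smul_zero]
    · simp
  have hne : ∀ k, u k ⬝ᵥ star (v k) ≠ 0 := by
    intro k h0
    obtain ⟨c, hc⟩ := hspan (v k)
    have h := hcoef c k
    rw [← hc, h0, mul_zero] at h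
    open scoped ComplexOrder in
    exact hv0 k (dotProduct_star_self_eq_zero.mp ((dotProduct_comm _ _).trans h))
  intro x
  obtain ⟨c, hc⟩ := hspan x
  have hx : ∀ k, hinner x (v k) / hinner (u k) (v k) = c k := by
    intro k
    rw [hdot, hdot, hc, hcoef, mul_div_cancel_right₀ _ (hne k)]
  simp_rw [hx]
  exact hc
end

section
/- An n×n complex matrix T is unitarily equivalent to a complex symmetric matrix if and only if there exists a conjugation C on ℂⁿ such that T x = C(Tᴴ(C x)) for every x ∈ ℂⁿ (i.e., T = C Tᴴ C as operators). -/
open Matrix BigOperators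

theorem hinner_eq {n : ℕ} (x y : Fin n → ℂ) : hinner x y = x ⬝ᵥ star y := rfl

theorem hinner_mulVec {n : ℕ} (T : Matrix (Fin n) (Fin n) ℂ) (x y : Fin n → ℂ) :
    hinner (T *ᵥ x) y = hinner x (Tᴴ *ᵥ y) := by
  rw [hinner_eq, hinner_eq, star_mulVec, conjTranspose_conjTranspose, dotProduct_comm,
    dotProduct_mulVec, dotProduct_comm]

theorem hinner_star {n : ℕ} (x y : Fin n → ℂ) : hinner (star x) (star y) = hinner y x := by
  rw [hinner_eq, hinner_eq, star_star, dotProduct_comm]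

theorem hinner_conj {n : ℕ} (x y : Fin n → ℂ) :
    (starRingEnd ℂ) (hinner x y) = hinner y x := by
  simp [hinner, mul_comm]

theorem hinner_add_left {n : ℕ} (x y z : Fin n → ℂ) :
    hinner (x + y) z = hinner x z + hinner y z := by
  simp [hinner_eq, add_dotProduct]

theorem hinner_smul_left {n : ℕ} (a : ℂ) (x z : Fin n → ℂ) :
    hinner (a • x) z = a * hinner x z := by
  simp [hinner_eq]

theorem hinner_smul_right {n : ℕ} (a : ℂ) (x z : Fin n → ℂ) :
    hinner x (a • z) = (starRingEnd ℂ) a * hinner x z := by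
  simp [hinner_eq]

theorem hinner_self {n : ℕ} (x : Fin n → ℂ) (hx : x ≠ 0) :
    ∃ r : ℝ, 0 < r ∧ hinner x x = r := by
  refine ⟨∑ i, Complex.normSq (x i), ?_, ?_⟩
  · obtain ⟨i, hi⟩ := Function.ne_iff.mp hx
    exact Finset.sum_pos' (fun i _ => Complex.normSq_nonneg _)
      ⟨i, Finset.mem_univ _, Complex.normSq_pos.mpr hi⟩
  · simp [hinner, Complex.mul_conj]

theorem exists_fixed_orthonormal {n : ℕ} {C : (Fin n → ℂ) → (Fin n → ℂ)}
    (hC : IsConjugation C) (k : ℕ) (hk : k ≤ n) :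
    ∃ v : Fin k → Fin n → ℂ, (∀ i, C (v i) = v i) ∧
      ∀ i j, hinner (v i) (v j) = if i = j then 1 else 0 := by
  obtain ⟨hadd, hsmul, hinv, hiso⟩ := hC
  induction k with
  | zero => exact ⟨fun i => i.elim0, fun i => i.elim0, fun i => i.elim0⟩
  | succ k ih =>
    obtain ⟨v, hv, ho⟩ := ih (by omega)
    let L : (Fin n → ℂ) →ₗ[ℂ] (Fin k → ℂ) :=
      { toFun := fun x i => hinner x (v i)
        map_add' := fun x y => by ext i; exact hinner_add_left _ _ _
        map_smul' := fun a x => by ext i; exact hinner_smul_left _ _ _ }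
    have hker : LinearMap.ker L ≠ ⊥ :=
      LinearMap.ker_ne_bot_of_finrank_lt (by simp; omega)
    obtain ⟨x, hxk, hx0⟩ := (Submodule.ne_bot_iff _).mp hker
    have hx : ∀ i, hinner x (v i) = 0 := fun i => congrFun (LinearMap.mem_ker.mp hxk) i
    have hCx : ∀ i, hinner (C x) (v i) = 0 := by
      intro i
      rw [← hv i, hiso, ← hinner_conj, hx, map_zero]
    -- a nonzero fixed vector orthogonal to all `v i`
    have hw : ∃ w : Fin n → ℂ, w ≠ 0 ∧ C w = w ∧ ∀ i, hinner w (v i) = 0 := by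
      by_cases h : x + C x = 0
      · refine ⟨Complex.I • x, by simp [hx0], ?_, ?_⟩
        · rw [hsmul, eq_neg_of_add_eq_zero_right h]; simp
        · intro i; rw [hinner_smul_left, hx, mul_zero]
      · refine ⟨x + C x, h, ?_, ?_⟩
        · rw [hadd, hinv, add_comm]
        · intro i; rw [hinner_add_left, hx, hCx, add_zero]
    obtain ⟨w, hw0, hwC, hwo⟩ := hw
    obtain ⟨r, hr, hrw⟩ := hinner_self w hw0
    let c : ℂ := ((Real.sqrt r)⁻¹ : ℝ)
    have hc : (starRingEnd ℂ) c = c := Complex.conj_ofReal _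
    have hcc : c * (c * (r : ℂ)) = 1 := by
      have : (Real.sqrt r)⁻¹ * ((Real.sqrt r)⁻¹ * r) = 1 := by
        have h1 := Real.sq_sqrt hr.le
        have h2 := (Real.sqrt_pos.mpr hr).ne'
        field_simp
        linarith
      simp only [c]
      exact_mod_cast this
    have hwo' : ∀ i, hinner (v i) w = 0 := fun i => by
      rw [← hinner_conj, hwo, map_zero]
    refine ⟨Fin.cons (c • w) v, ?_, ?_⟩
    · intro i
      refine Fin.cases ?_ (fun i => ?_) i
      · simp [hsmul, hc, hwC]
      · simp [hv]
    · intro i j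
      refine Fin.cases ?_ (fun i => ?_) i <;> refine Fin.cases ?_ (fun j => ?_) j
      · simp [hinner_smul_left, hinner_smul_right, hc, hrw, hcc]
      · simp [hinner_smul_left, hwo, (Fin.succ_ne_zero _).symm]
      · simp [hinner_smul_right, hwo']
      · simp [ho]

/-- `T` is UECSM if and only if `T = C Tᴴ C` for some conjugation `C` on ℂⁿ. -/
theorem uecsm_iff_exists_conjugation {n : ℕ} (T : Matrix (Fin n) (Fin n) ℂ) :
    UECSM T ↔ ∃ C : (Fin n → ℂ) → (Fin n → ℂ), IsConjugation C ∧
      ∀ x : Fin n → ℂ, T.mulVec x = C (Tᴴ.mulVec (C x)) := by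
  constructor
  · rintro ⟨Q, h1, h2, hS⟩
    have hstar : ∀ (M : Matrix (Fin n) (Fin n) ℂ) (x : Fin n → ℂ),
        star (Mᴴ *ᵥ star x) = Mᵀ *ᵥ x := by
      intro M x
      rw [star_mulVec, star_star, conjTranspose_conjTranspose, mulVec_transpose]
    refine ⟨fun x => Q *ᵥ star (Qᴴ *ᵥ x), ⟨?_, ?_, ?_, ?_⟩, ?_⟩
    · intro x y
      simp [mulVec_add]
    · intro a x
      simp [mulVec_smul]
    · intro x
      simp only [mulVec_mulVec, h1, one_mulVec, star_star, h2]
    · intro x y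
      rw [hinner_mulVec, mulVec_mulVec, h1, one_mulVec, hinner_star, hinner_mulVec,
        conjTranspose_conjTranspose, mulVec_mulVec, h2, one_mulVec]
    · intro x
      have e : Qᴴ *ᵥ (Tᴴ *ᵥ (Q *ᵥ star (Qᴴ *ᵥ x))) = (Qᴴ * T * Q)ᴴ *ᵥ star (Qᴴ *ᵥ x) := by
        simp only [mulVec_mulVec, conjTranspose_mul, conjTranspose_conjTranspose, Matrix.mul_assoc]
      simp only [e]
      rw [hstar, hS, mulVec_mulVec, mulVec_mulVec]
      have : Q * (Qᴴ * T * Q * Qᴴ) = (Q * Qᴴ) * T * (Q * Qᴴ) := by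
        simp only [Matrix.mul_assoc]
      first
        | rw [this, h2, Matrix.one_mul, Matrix.mul_one]
        | rw [Matrix.mul_assoc Q, this, h2, Matrix.one_mul, Matrix.mul_one]
  · rintro ⟨C, hC, hT⟩
    obtain ⟨v, hv, ho⟩ := exists_fixed_orthonormal hC n le_rfl
    let Q : Matrix (Fin n) (Fin n) ℂ := Matrix.of fun i j => v j i
    have hent : ∀ (M : Matrix (Fin n) (Fin n) ℂ) i j,
        (Qᴴ * M * Q) i j = hinner (M *ᵥ v j) (v i) := by
      intro M i j
      rw [Matrix.mul_assoc, Matrix.mul_apply]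
      unfold hinner
      refine Finset.sum_congr rfl fun k _ => ?_
      rw [mul_comm]
      rfl
    have h1 : Qᴴ * Q = 1 := by
      ext i j
      have := hent 1 i j
      rw [Matrix.mul_one, one_mulVec, ho] at this
      rw [this, Matrix.one_apply]
      simp only [eq_comm]
    refine ⟨Q, h1, mul_eq_one_comm.mp h1, ?_⟩
    ext i j
    rw [transpose_apply, hent, hent, hT (v i), hv i]
    conv_lhs => rw [← hv j]
    rw [hC.2.2.2, ← hinner_mulVec]
end

section
/- (Grammian Test) Let T be an n×n complex matrix with n distinct eigenvalues λ_1,…,λ_n, let u_1,…,u_n be unit eigenvectors of T with T u_i = λ_i u_i, and let v_1,…,v_n be unit eigenvectors of Tᴴ with Tᴴ v_i = conj(λ_i) v_i. Let U and V be the n×n matrices whose columns are u_1,…,u_n and v_1,…,v_n respectively. If T is UECSM, then the Gram matrices UᴴU and VᴴV have the same characteristic polynomial (equivalently, the same eigenvalues with multiplicity). -/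
open Matrix BigOperators

/-- (Grammian Test) If `T` is UECSM then the Gram matrices `UᴴU` and `VᴴV` have
the same eigenvalues with multiplicity, i.e. the same characteristic polynomial. -/
theorem grammian_test {n : ℕ} (T : Matrix (Fin n) (Fin n) ℂ)
    (lam : Fin n → ℂ) (hlam : Function.Injective lam)
    (u v : Fin n → (Fin n → ℂ))
    (hu1 : ∀ i, hinner (u i) (u i) = 1)
    (hu : ∀ i, T.mulVec (u i) = lam i • u i)
    (hv1 : ∀ i, hinner (v i) (v i) = 1)
    (hv : ∀ i, Tᴴ.mulVec (v i) = (starRingEnd ℂ) (lam i) • v i)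
    (U V : Matrix (Fin n) (Fin n) ℂ)
    (hU : U = Matrix.of fun r c => u c r)
    (hV : V = Matrix.of fun r c => v c r)
    (hT : UECSM T) :
    (Uᴴ * U).charpoly = (Vᴴ * V).charpoly := by
  obtain ⟨Q, hQ1, hQ2, hS⟩ := hT
  have hQ3 : Qᵀ * Qᴴᵀ = 1 := by rw [← transpose_mul, hQ1, transpose_one]
  have hQ4 : Qᴴᵀ * Qᵀ = 1 := by rw [← transpose_mul, hQ2, transpose_one]
  -- the unitary symmetric matrix intertwining `T` and its transpose
  have hW : T * (Q * Qᵀ) = (Q * Qᵀ) * Tᵀ := by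
    have h1 : Qᵀ * (Tᵀ * Qᴴᵀ) = Qᴴ * T * Q := by
      rw [← hS, transpose_mul, transpose_mul]
    calc T * (Q * Qᵀ) = (Q * Qᴴ) * T * (Q * Qᵀ) := by rw [hQ2, one_mul]
      _ = Q * (Qᴴ * T * Q) * Qᵀ := by simp only [Matrix.mul_assoc]
      _ = Q * (Qᵀ * (Tᵀ * Qᴴᵀ)) * Qᵀ := by rw [h1]
      _ = (Q * Qᵀ) * Tᵀ * (Qᴴᵀ * Qᵀ) := by simp only [Matrix.mul_assoc]
      _ = _ := by rw [hQ4, mul_one]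
  have hTU : T * U = U * diagonal lam := by
    ext i j
    have := congrFun (hu j) i
    rw [mul_diagonal, hU]
    simpa [Matrix.mul_apply, mulVec, dotProduct, mul_comm] using this
  have hTV : Tᴴ * V = V * diagonal (star lam) := by
    ext i j
    have := congrFun (hv j) i
    rw [mul_diagonal, hV]
    simpa [Matrix.mul_apply, mulVec, dotProduct, mul_comm] using this
  have hTV2 : Tᵀ * Vᴴᵀ = Vᴴᵀ * diagonal lam := by
    have h := congrArg (fun M => Mᴴᵀ) hTV
    simpa [transpose_mul, conjTranspose_mul, diagonal_conjTranspose] using h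
  have hUu : IsUnit U := by
    rw [← Matrix.linearIndependent_cols_iff_isUnit]
    have h := Module.End.eigenvectors_linearIndependent' (Matrix.toLin' T) lam hlam u
      (fun i => by
        refine ⟨Module.End.mem_eigenspace_iff.2 (by simpa using hu i), ?_⟩
        intro h0
        have := hu1 i
        simp [hinner, h0] at this)
    have e : U.col = u := by
      rw [hU]; rfl
    rw [e]; exact h
  have hUd : IsUnit U.det := (Matrix.isUnit_iff_isUnit_det _).1 hUu
  obtain ⟨X, hX⟩ : ∃ X, X = Q * Qᵀ * Vᴴᵀ := ⟨_, rfl⟩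
  have hTX : T * X = X * diagonal lam := by
    rw [hX, ← Matrix.mul_assoc, hW, Matrix.mul_assoc _ Tᵀ, hTV2]
    simp only [Matrix.mul_assoc]
  obtain ⟨M, hM⟩ : ∃ M, M = U⁻¹ * X := ⟨_, rfl⟩
  have hUM : U * M = X := by
    rw [hM, Matrix.mul_nonsing_inv_cancel_left _ _ hUd]
  have hcomm : diagonal lam * M = M * diagonal lam := by
    have h : U * (diagonal lam * M) = U * (M * diagonal lam) := by
      rw [← Matrix.mul_assoc, ← hTU, Matrix.mul_assoc, hUM, hTX, ← Matrix.mul_assoc, hUM]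
    have h2 := congrArg (fun Z => U⁻¹ * Z) h
    simpa only [Matrix.nonsing_inv_mul_cancel_left _ _ hUd] using h2
  obtain ⟨d, hd⟩ : ∃ d : Fin n → ℂ, M = diagonal d := by
    refine ⟨fun i => M i i, ?_⟩
    ext i j
    by_cases hij : i = j
    · subst hij; simp
    · rw [diagonal_apply_ne _ hij]
      have h := congrFun (congrFun hcomm i) j
      rw [diagonal_mul, mul_diagonal] at h
      have h3 : (lam i - lam j) * M i j = 0 := by linear_combination h
      rcases mul_eq_zero.1 h3 with h4 | h4
      · exact absurd (hlam (sub_eq_zero.1 h4)) hij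
      · exact h4
  have hXX : Xᴴ * X = (Vᴴ * V)ᵀ := by
    have e1 : (Q * Qᵀ)ᴴ * (Q * Qᵀ) = 1 := by
      rw [conjTranspose_mul]
      have : Qᵀᴴ = Qᴴᵀ := rfl
      rw [this, Matrix.mul_assoc, ← Matrix.mul_assoc Qᴴ, hQ1, one_mul, hQ4]
    have e2 : Vᴴᵀᴴ = Vᵀ := by ext i j; simp
    rw [hX, conjTranspose_mul, Matrix.mul_assoc, ← Matrix.mul_assoc _ (Q * Qᵀ), e1, one_mul, e2,
      transpose_mul]
  have hDD : Xᴴ * X = (diagonal d)ᴴ * ((Uᴴ * U) * diagonal d) := by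
    rw [← hUM, hd, conjTranspose_mul]
    simp only [Matrix.mul_assoc]
  have hUi : ∀ i, (Uᴴ * U) i i = 1 := by
    intro i
    rw [← hu1 i, hU]
    simp [Matrix.mul_apply, hinner, mul_comm]
  have hVi : ∀ i, (Vᴴ * V) i i = 1 := by
    intro i
    rw [← hv1 i, hV]
    simp [Matrix.mul_apply, hinner, mul_comm]
  have hdd : ∀ i, d i * star (d i) = 1 := by
    intro i
    have h := congrFun (congrFun (hXX.symm.trans hDD) i) i
    rw [transpose_apply, hVi, diagonal_conjTranspose, diagonal_mul, mul_diagonal, hUi] at h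
    rw [h]; simp [mul_comm]
  have hD1 : diagonal d * (diagonal d)ᴴ = 1 := by
    rw [diagonal_conjTranspose, diagonal_mul_diagonal, ← diagonal_one]
    congr 1
    funext i
    exact hdd i
  rw [← Matrix.charpoly_transpose (Vᴴ * V), ← hXX, hDD, Matrix.charpoly_mul_comm (diagonal d)ᴴ,
    Matrix.mul_assoc (Uᴴ * U), hD1, mul_one]
end

section
/- Every 2×2 complex matrix is UECSM: for every 2×2 matrix T over ℂ there exists a 2×2 unitary matrix Q such that Qᴴ T Q equals its own transpose. -/
open Matrix BigOperators

lemma exists_real_kernel (α β γ α' β' γ' : ℝ) : ∃ n1 n2 n3 : ℝ, 0 ≤ n1 ∧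
    0 < n1 ^ 2 + n2 ^ 2 + n3 ^ 2 ∧ α * n1 + β * n2 + γ * n3 = 0 ∧
    α' * n1 + β' * n2 + γ' * n3 = 0 := by
  have hdet : (!![α, β, γ; α', β', γ'; 0, 0, 0] : Matrix (Fin 3) (Fin 3) ℝ).det = 0 := by
    simp [Matrix.det_fin_three]
  obtain ⟨v, hv, h⟩ := Matrix.exists_mulVec_eq_zero_iff.mpr hdet
  have h0 := congrFun h 0
  have h1 := congrFun h 1
  simp [Matrix.mulVec, dotProduct, Fin.sum_univ_three] at h0 h1
  have hpos : 0 < v 0 ^ 2 + v 1 ^ 2 + v 2 ^ 2 := by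
    by_contra hc
    apply hv
    funext i
    fin_cases i <;> simp <;>
      nlinarith [sq_nonneg (v 0), sq_nonneg (v 1), sq_nonneg (v 2)]
  rcases le_total 0 (v 0) with h' | h'
  · exact ⟨v 0, v 1, v 2, h', hpos, h0, h1⟩
  · exact ⟨-v 0, -v 1, -v 2, by linarith, by nlinarith, by linarith, by linarith⟩

lemma exists_su2 (b c e : ℂ) : ∃ x1 x2 y : ℝ, x1 ^ 2 + x2 ^ 2 + y ^ 2 = 1 ∧
    (b - c).re * (x1 ^ 2 - x2 ^ 2 - y ^ 2) + (b + c).im * (2 * x1 * x2)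
      + e.im * (2 * x1 * y) = 0 ∧
    (b - c).im * (x1 ^ 2 - x2 ^ 2 - y ^ 2) - (b + c).re * (2 * x1 * x2)
      - e.re * (2 * x1 * y) = 0 := by
  obtain ⟨n1, n2, n3, hn, hp, h0, h1⟩ := exists_real_kernel (b - c).re (b + c).im e.im
    (b - c).im (-(b + c).re) (-e.re)
  obtain ⟨N, hN, hN2⟩ : ∃ N : ℝ, 0 < N ∧ N ^ 2 = n1 ^ 2 + n2 ^ 2 + n3 ^ 2 :=
    ⟨√(n1 ^ 2 + n2 ^ 2 + n3 ^ 2), Real.sqrt_pos.mpr hp, Real.sq_sqrt hp.le⟩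
  have hD : 0 < (N + n1) ^ 2 + n2 ^ 2 + n3 ^ 2 := by positivity
  obtain ⟨k, hk⟩ : ∃ k : ℝ, k ^ 2 * ((N + n1) ^ 2 + n2 ^ 2 + n3 ^ 2) = 1 := by
    refine ⟨(√((N + n1) ^ 2 + n2 ^ 2 + n3 ^ 2))⁻¹, ?_⟩
    rw [inv_pow, Real.sq_sqrt hD.le]
    exact inv_mul_cancel₀ hD.ne'
  refine ⟨k * (N + n1), k * n2, k * n3, by linear_combination hk, ?_, ?_⟩
  · linear_combination 2 * k ^ 2 * (N + n1) * h0 + (b - c).re * k ^ 2 * hN2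
  · linear_combination 2 * k ^ 2 * (N + n1) * h1 + (b - c).im * k ^ 2 * hN2

/-- Every 2 × 2 complex matrix is UECSM. -/
theorem two_by_two_UECSM (T : Matrix (Fin 2) (Fin 2) ℂ) : UECSM T := by
  obtain ⟨x1, x2, y, hu, hr, hi⟩ := exists_su2 (T 0 1) (T 1 0) (T 1 1 - T 0 0)
  let Q : Matrix (Fin 2) (Fin 2) ℂ := !![⟨x1, x2⟩, ⟨0, y⟩; ⟨0, y⟩, ⟨x1, -x2⟩]
  have hQ : Qᴴ * Q = 1 := by
    ext i j
    fin_cases i <;> fin_cases j <;> apply Complex.ext <;>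
      simp [Q, Matrix.mul_apply, Fin.sum_univ_two] <;> linarith
  have hs : (Qᴴ * T * Q) 0 1 = (Qᴴ * T * Q) 1 0 := by
    simp only [Complex.sub_re, Complex.sub_im, Complex.add_re, Complex.add_im] at hr hi
    apply Complex.ext
    · simp [Q, Matrix.mul_apply, Fin.sum_univ_two]
      linear_combination hr
    · simp [Q, Matrix.mul_apply, Fin.sum_univ_two]
      linear_combination hi
  refine ⟨Q, hQ, mul_eq_one_comm.mp hQ, ?_⟩
  ext i j
  fin_cases i <;> fin_cases j
  · rfl
  · exact hs.symm
  · exact hs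
  · rfl
end

section
/- For any n×n complex matrix T and any k ≥ 1, T is UECSM if and only if the (n+k)×(n+k) block-diagonal matrix T ⊕ 0 (with T in the upper-left block and the k×k zero matrix in the lower-right block) is UECSM. -/
open Matrix BigOperators

lemma takagi_step {n : ℕ} (R : EuclideanSpace ℂ (Fin n) →ₗ[ℝ] EuclideanSpace ℂ (Fin n))
    (hI : ∀ x, R (Complex.I • x) = -(Complex.I • R x))
    (hs : ∀ x y, inner ℂ (R x) y = inner ℂ (R y) x)
    (K : Submodule ℂ (EuclideanSpace ℂ (Fin n))) (hK : K ≠ ⊥) (hinv : ∀ x ∈ K, R x ∈ K) :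
    ∃ v ∈ K, ‖v‖ = 1 ∧ ∃ s : ℝ, 0 ≤ s ∧ R v = (s : ℂ) • v := by
  let : InnerProductSpace ℝ (EuclideanSpace ℂ (Fin n)) := InnerProductSpace.rclikeToReal ℂ _
  have hsymm : R.IsSymmetric := by
    intro x y
    change (inner ℂ (R x) y).re = (inner ℂ x (R y)).re
    rw [hs, ← inner_conj_symm, Complex.conj_re]
  have hsymm' := hsymm.restrict_invariant (V := K.restrictScalars ℝ) (fun x hx => hinv x hx)
  have : Nontrivial (K.restrictScalars ℝ) := by
    obtain ⟨x, hx, hx0⟩ := Submodule.exists_mem_ne_zero_of_ne_bot hK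
    exact ⟨⟨x, hx⟩, 0, fun h => hx0 (congrArg Subtype.val h)⟩
  have hev := hsymm'.hasEigenvalue_iSup_of_finiteDimensional
  obtain ⟨w, hw⟩ := hev.exists_hasEigenvector
  generalize (⨆ x : { x : (K.restrictScalars ℝ) // x ≠ 0 }, _ : ℝ) = l at hw
  have hw1 : R w.1 = (l : ℂ) • w.1 := by
    have := congrArg Subtype.val hw.apply_eq_smul
    rw [Complex.coe_smul]
    exact this
  have hw0 : w.1 ≠ 0 := fun h => hw.2 (Subtype.ext h)
  have key : ∃ u ∈ K, u ≠ 0 ∧ ∃ s : ℝ, 0 ≤ s ∧ R u = (s : ℂ) • u := by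
    rcases le_total 0 l with h | h
    · exact ⟨w.1, w.2, hw0, l, h, hw1⟩
    · refine ⟨Complex.I • w.1, K.smul_mem _ w.2, by simpa using hw0, -l, by linarith, ?_⟩
      rw [hI, hw1, smul_comm]; simp
  obtain ⟨u, hu, hu0, s, hs0, hRu⟩ := key
  refine ⟨((‖u‖⁻¹ : ℝ) : ℂ) • u, K.smul_mem _ hu, ?_, s, hs0, ?_⟩
  · rw [norm_smul]; simp [hu0]
  · rw [Complex.coe_smul, R.map_smul, hRu, smul_comm]

lemma takagi_family {n : ℕ} (R : EuclideanSpace ℂ (Fin n) →ₗ[ℝ] EuclideanSpace ℂ (Fin n))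
    (hI : ∀ x, R (Complex.I • x) = -(Complex.I • R x))
    (hs : ∀ x y, inner ℂ (R x) y = inner ℂ (R y) x) (m : ℕ) (hm : m ≤ n) :
    ∃ (v : Fin m → EuclideanSpace ℂ (Fin n)) (s : Fin m → ℝ), Orthonormal ℂ v ∧
      (∀ i, 0 ≤ s i) ∧ ∀ i, R (v i) = (s i : ℂ) • v i := by
  induction m with
  | zero => exact ⟨Fin.elim0, Fin.elim0, ⟨fun i => i.elim0, fun i => i.elim0⟩,
      fun i => i.elim0, fun i => i.elim0⟩
  | succ m ih =>
    obtain ⟨v, s, hv, hs0, hR⟩ := ih (by omega)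
    have hne : (Submodule.span ℂ (Set.range v))ᗮ ≠ ⊥ := by
      intro h
      rw [Submodule.orthogonal_eq_bot_iff] at h
      have h1 := finrank_span_eq_card hv.linearIndependent
      rw [h, finrank_top] at h1
      simp at h1
      omega
    have hmem : ∀ x, x ∈ (Submodule.span ℂ (Set.range v))ᗮ ↔ ∀ i, inner ℂ (v i) x = 0 := by
      intro x
      constructor
      · intro h i
        exact (Submodule.mem_orthogonal _ _).mp h _ (Submodule.subset_span ⟨i, rfl⟩)
      · intro h
        rw [Submodule.mem_orthogonal]
        intro u hu
        induction hu using Submodule.span_induction with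
        | mem u hu => obtain ⟨i, rfl⟩ := hu; exact h i
        | zero => simp
        | add a b _ _ ha hb => rw [inner_add_left, ha, hb, add_zero]
        | smul c a _ ha => rw [inner_smul_left, ha, mul_zero]
    obtain ⟨w, hw, hw1, t, ht, hRw⟩ := takagi_step R hI hs _ hne (by
      intro x hx
      rw [hmem] at hx ⊢
      intro i
      rw [← inner_conj_symm, hs, hR, inner_smul_left, hx i]; simp)
    rw [hmem] at hw
    have hw' : ∀ i, inner ℂ w (v i) = 0 := fun i => by rw [← inner_conj_symm, hw i]; simp
    refine ⟨Fin.cons w v, Fin.cons t s, ⟨?_, ?_⟩, ?_, ?_⟩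
    · intro i
      refine Fin.cases ?_ (fun i => ?_) i
      · simpa using hw1
      · simpa using hv.1 i
    · intro i j
      refine Fin.cases ?_ (fun i => ?_) i <;> refine Fin.cases ?_ (fun j => ?_) j
      · simp
      · intro _; simpa using hw' j
      · intro _; simpa using hw i
      · intro h; simpa using hv.2 (fun e => h (by rw [e]))
    · intro i
      refine Fin.cases ?_ (fun i => ?_) i
      · simpa using ht
      · simpa using hs0 i
    · intro i
      refine Fin.cases ?_ (fun i => ?_) i
      · simpa using hRw
      · simpa using hR i

/-- Takagi factorization of a complex symmetric matrix. -/
lemma takagi {n : ℕ} (A : Matrix (Fin n) (Fin n) ℂ) (hA : Aᵀ = A) :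
    ∃ (U : Matrix (Fin n) (Fin n) ℂ) (σ : Fin n → ℝ), Uᴴ * U = 1 ∧ (∀ i, 0 ≤ σ i) ∧
      A * U.map star = U * diagonal (fun i => (σ i : ℂ)) := by
  let R : EuclideanSpace ℂ (Fin n) →ₗ[ℝ] EuclideanSpace ℂ (Fin n) :=
    { toFun := fun x => WithLp.toLp 2 (A *ᵥ star (WithLp.ofLp x))
      map_add' := by
        intro x y
        ext i; simp [mulVec_add]
      map_smul' := by
        intro c x
        ext i
        simp [mulVec, dotProduct, Finset.mul_sum]
        exact Finset.sum_congr rfl fun _ _ => by ring }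
  have hRdef : ∀ x, R x = WithLp.toLp 2 (A *ᵥ star (WithLp.ofLp x)) := fun _ => rfl
  have hAH : Aᴴᵀ = Aᴴ := congrArg (fun M => M.map star) hA.symm
  obtain ⟨v, s, hv, hs0, hR⟩ := takagi_family R
    (by
      intro x
      ext i
      simp [hRdef, mulVec, dotProduct, Finset.mul_sum]
      exact Finset.sum_congr rfl fun _ _ => by ring)
    (by
      intro x y
      simp only [hRdef, EuclideanSpace.inner_eq_star_dotProduct, star_mulVec, star_star]
      rw [dotProduct_comm, ← dotProduct_mulVec, dotProduct_comm, ← vecMul_transpose,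
        hAH, dotProduct_comm]) n le_rfl
  refine ⟨Matrix.of fun i j => v j i, s, ?_, hs0, ?_⟩
  · ext i j
    have := (orthonormal_iff_ite.mp hv) i j
    rw [EuclideanSpace.inner_eq_star_dotProduct, dotProduct_comm] at this
    rw [one_apply, ← this]
    simp [mul_apply, dotProduct]
  · ext i j
    have := congrArg (fun x => x i) (hR j)
    rw [mul_diagonal]
    simp [hRdef, mulVec, dotProduct] at this
    simp [mul_apply, this, mul_comm]

lemma backAux {n : ℕ} (T A : Matrix (Fin n) (Fin n) ℂ) (hA : Aᵀ = A)
    (h1 : T * A = A * Tᵀ) (h2 : T * (A * Aᴴ) = T) (h3 : (A * Aᴴ) * T = T) : UECSM T := by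
  obtain ⟨U, σ, hU, hσ, h⟩ := takagi A hA
  have hU' : U * Uᴴ = 1 := mul_eq_one_comm.mp hU
  refine ⟨U, hU, hU', ?_⟩
  set D := diagonal (fun i => (σ i : ℂ)) with hD
  have hDH : Dᴴ = D := by
    rw [hD, diagonal_conjTranspose]; congr 1; ext i; simp
  have hDT : Dᵀ = D := diagonal_transpose _
  have e1 : U.map star * Uᵀ = 1 := by
    have := congrArg transpose hU'
    rw [transpose_mul, transpose_one] at this
    exact this
  have e2 : Uᵀ * U.map star = 1 := mul_eq_one_comm.mp e1
  have hAe : A = U * D * Uᵀ := by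
    rw [← h, mul_assoc, e1, mul_one]
  have hUTH : Uᵀᴴ = U.map star := by ext; simp
  have hAA : A * Aᴴ = U * (D * D) * Uᴴ := by
    rw [hAe, conjTranspose_mul, conjTranspose_mul, hDH, hUTH]
    calc U * D * Uᵀ * (U.map star * (D * Uᴴ)) = U * D * (Uᵀ * U.map star) * (D * Uᴴ) := by noncomm_ring
      _ = _ := by rw [e2]; noncomm_ring
  set X := Uᴴ * T * U with hX
  have hT : T = U * X * Uᴴ := by
    calc T = (U * Uᴴ) * T * (U * Uᴴ) := by rw [hU']; simp
      _ = _ := by rw [hX]; noncomm_ring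
  have k2 : X * (D * D) = X := by
    calc X * (D * D) = Uᴴ * (T * (U * (D * D) * Uᴴ)) * U := by
          rw [show Uᴴ * (T * (U * (D * D) * Uᴴ)) * U = X * (D * D) * (Uᴴ * U) by rw [hX]; noncomm_ring, hU, mul_one]
      _ = X := by rw [← hAA, h2]
  have k3 : (D * D) * X = X := by
    calc (D * D) * X = Uᴴ * ((U * (D * D) * Uᴴ) * T) * U := by
          rw [show Uᴴ * ((U * (D * D) * Uᴴ) * T) * U = (Uᴴ * U) * (D * D) * X by rw [hX]; noncomm_ring, hU, one_mul]
      _ = X := by rw [← hAA, h3]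
  have k1 : X * D = D * Xᵀ := by
    have hXT : Xᵀ = Uᵀ * Tᵀ * U.map star := by
      rw [hX, transpose_mul, transpose_mul, ← mul_assoc]; rfl
    calc X * D = Uᴴ * (T * A) * U.map star := by
          rw [hAe, show Uᴴ * (T * (U * D * Uᵀ)) * U.map star = X * D * (Uᵀ * U.map star) by rw [hX]; noncomm_ring, e2, mul_one]
      _ = Uᴴ * (A * Tᵀ) * U.map star := by rw [h1]
      _ = _ := by
          rw [hXT, hAe, show Uᴴ * (U * D * Uᵀ * Tᵀ) * U.map star = (Uᴴ * U) * D * (Uᵀ * Tᵀ * U.map star) by noncomm_ring, hU, one_mul]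
  have c2 : ∀ i j, X i j ≠ 0 → σ j = 1 := by
    intro i j hij
    have := congrFun (congrFun k2 i) j
    rw [hD, diagonal_mul_diagonal, mul_diagonal] at this
    have h' : (σ j : ℂ) * σ j = 1 := by
      apply mul_left_cancel₀ hij; rw [this, mul_one]
    have h'' : σ j * σ j = 1 := by exact_mod_cast h'
    nlinarith [hσ j]
  have c3 : ∀ i j, X i j ≠ 0 → σ i = 1 := by
    intro i j hij
    have := congrFun (congrFun k3 i) j
    rw [hD, diagonal_mul_diagonal, diagonal_mul] at this
    have h' : (σ i : ℂ) * σ i = 1 := by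
      apply mul_right_cancel₀ hij; rw [this, one_mul]
    have h'' : σ i * σ i = 1 := by exact_mod_cast h'
    nlinarith [hσ i]
  ext i j
  have := congrFun (congrFun k1 i) j
  rw [hD, mul_diagonal, diagonal_mul, transpose_apply] at this
  rw [transpose_apply]
  by_cases hij : X i j = 0
  · by_cases hji : X j i = 0
    · rw [hij, hji]
    · rw [c2 _ _ hji, hij] at this
      simp at this; exact absurd this.symm (by simpa using hji)
  · rw [c2 _ _ hij, c3 _ _ hij] at this
    simpa using this.symm

/-- `T` is UECSM if and only if `T ⊕ 0` is UECSM. -/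
theorem UECSM_iff_fromBlocks_zero {n k : ℕ} (hk : 1 ≤ k)
    (T : Matrix (Fin n) (Fin n) ℂ) :
    UECSM T ↔ UECSM (Matrix.fromBlocks T 0 0 (0 : Matrix (Fin k) (Fin k) ℂ)) := by
  constructor
  · rintro ⟨Q, h1, h2, h3⟩
    refine ⟨fromBlocks Q 0 0 1, ?_, ?_, ?_⟩
    · simp [fromBlocks_conjTranspose, fromBlocks_multiply, h1]
    · simp [fromBlocks_conjTranspose, fromBlocks_multiply, h2]
    · simp only [fromBlocks_conjTranspose, fromBlocks_multiply, fromBlocks_transpose]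
      simp [h3]
  · rintro ⟨Q, h1, h2, h3⟩
    set M := Matrix.fromBlocks T 0 0 (0 : Matrix (Fin k) (Fin k) ℂ) with hM
    have e1 : Q.map star * Qᵀ = 1 := by
      have := congrArg transpose h2
      rw [transpose_mul, transpose_one] at this
      exact this
    have e2 : Qᵀ * Q.map star = 1 := mul_eq_one_comm.mp e1
    have h3' : Qᵀ * Mᵀ * Q.map star = Qᴴ * M * Q := by
      rw [← h3, transpose_mul, transpose_mul, ← mul_assoc]; rfl
    have hQTH : Qᵀᴴ = Q.map star := by ext; simp
    obtain ⟨S, hS⟩ : ∃ S, S = Q * Qᵀ := ⟨_, rfl⟩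
    have hST : Sᵀ = S := by rw [hS]; simp
    have hSS : S * Sᴴ = 1 := by
      rw [hS, conjTranspose_mul, hQTH, show Q * Qᵀ * (Q.map star * Qᴴ) = Q * (Qᵀ * Q.map star) * Qᴴ by noncomm_ring, e2, mul_one, h2]
    have hSS' : Sᴴ * S = 1 := mul_eq_one_comm.mp hSS
    have hMS : M * S = S * Mᵀ := by
      calc M * S = (Q * Qᴴ) * M * S := by rw [h2, one_mul]
        _ = Q * (Qᴴ * M * Q) * Qᵀ := by rw [hS]; noncomm_ring
        _ = S * Mᵀ * (Q.map star * Qᵀ) := by rw [← h3', hS]; noncomm_ring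
        _ = _ := by rw [e1, mul_one]
    have hMS' : S * Mᵀᴴ = Mᴴ * S := by
      have : Sᴴ * M = Mᵀ * Sᴴ := by
        calc Sᴴ * M = Sᴴ * (M * S) * Sᴴ := by
              rw [mul_assoc, mul_assoc, hSS, mul_one]
          _ = (Sᴴ * S) * Mᵀ * Sᴴ := by rw [hMS]; noncomm_ring
          _ = _ := by rw [hSS', one_mul]
      have := congrArg conjTranspose this
      rw [conjTranspose_mul, conjTranspose_mul, conjTranspose_conjTranspose] at this
      exact this.symm
    obtain ⟨A, B, C, D, hSb⟩ : ∃ A B C D, S = fromBlocks A B C D :=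
      ⟨_, _, _, _, (fromBlocks_toBlocks S).symm⟩
    rw [hSb] at hST hSS hMS hMS'
    simp only [hM, fromBlocks_transpose, fromBlocks_conjTranspose, fromBlocks_multiply] at hST hSS hMS hMS'
    rw [← fromBlocks_one] at hSS
    rw [fromBlocks_inj] at hST hSS hMS hMS'
    simp at hMS hMS'
    have hTB : T * B = 0 := hMS.2.1
    have hTB' : Bᴴ * T = 0 := by
      have := congrArg conjTranspose hMS'.2.1
      simpa using this.symm
    have hAA : A * Aᴴ = 1 - B * Bᴴ := eq_sub_of_add_eq hSS.1
    refine backAux T A hST.1 hMS.1 ?_ ?_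
    · rw [hAA, Matrix.mul_sub, ← Matrix.mul_assoc, hTB]; simp
    · rw [hAA, Matrix.sub_mul, Matrix.mul_assoc, hTB']; simp
end

section
/- The 3×3 matrix with rows (0, 1, 1), (0, 1, 0), (0, 0, 2) is not UECSM. -/
open Matrix BigOperators

/-- Transposing a symmetric matrix reverses words in `S`, `Sᴴ`, so these two traces agree. -/
lemma trace_word_symm (S : Matrix (Fin 3) (Fin 3) ℂ) (h : Sᵀ = S) :
    trace (Sᴴ * S * Sᴴ * S * S * Sᴴ) = trace (Sᴴ * S * S * Sᴴ * S * Sᴴ) := by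
  have h2 : Sᴴᵀ = Sᴴ := by
    calc Sᴴᵀ = Sᵀᴴ := by ext i j; simp
      _ = Sᴴ := by rw [h]
  rw [← trace_transpose (Sᴴ * S * Sᴴ * S * S * Sᴴ)]
  simp only [transpose_mul, h, h2, Matrix.mul_assoc]

/-- The same identity is invariant under unitary equivalence. -/
lemma trace_word_UECSM (T : Matrix (Fin 3) (Fin 3) ℂ) (h : UECSM T) :
    trace (Tᴴ * T * Tᴴ * T * T * Tᴴ) = trace (Tᴴ * T * T * Tᴴ * T * Tᴴ) := by
  obtain ⟨Q, h1, h2, h3⟩ := h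
  have h4 := trace_word_symm _ h3
  have key : ∀ X : Matrix (Fin 3) (Fin 3) ℂ, Q * (Qᴴ * X) = X := by
    intro X
    rw [← Matrix.mul_assoc, h2, Matrix.one_mul]
  simp only [conjTranspose_mul, conjTranspose_conjTranspose, Matrix.mul_assoc, key] at h4
  rw [trace_mul_comm, trace_mul_comm Qᴴ] at h4
  simpa only [Matrix.mul_assoc, h2, Matrix.mul_one] using h4

/-- The matrix `[[0,1,1],[0,1,0],[0,0,2]]` is not UECSM. -/
theorem not_UECSM_example :
    ¬ UECSM !![(0 : ℂ), 1, 1; 0, 1, 0; 0, 0, 2] := by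
  intro h
  have h1 := trace_word_UECSM _ h
  have hT : (!![(0 : ℂ), 1, 1; 0, 1, 0; 0, 0, 2])ᴴ = !![(0 : ℂ), 0, 0; 1, 1, 0; 1, 0, 2] := by
    ext i j
    fin_cases i <;> fin_cases j <;> simp [conjTranspose_apply]
  rw [hT] at h1
  simp [Matrix.trace, Fin.sum_univ_three, Matrix.mul_apply] at h1
  norm_num at h1
end

section
/- The 4×4 integer matrix with rows (5, 0, −1, 3), (2, 4, 1, 2), (2, −2, 6, −2), (0, −2, 1, 4), regarded as a complex matrix, is not UECSM. -/
open Matrix BigOperators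

/-- If `T` is unitarily equivalent to a symmetric matrix then the trace of a word in `T` and `Tᴴ`
equals the trace of the reversed word. -/
theorem trace_word_of_symm {m : Type*} [Fintype m] [DecidableEq m] (T Q : Matrix m m ℂ)
    (h2 : Q * Qᴴ = 1) (h3 : (Qᴴ * T * Q)ᵀ = Qᴴ * T * Q) :
    (T * T * Tᴴ * T * Tᴴ * Tᴴ).trace = (Tᴴ * Tᴴ * T * Tᴴ * T * T).trace := by
  have hmul : ∀ A B : Matrix m m ℂ, (Qᴴ * A * Q) * (Qᴴ * B * Q) = Qᴴ * (A * B) * Q := by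
    intro A B
    calc (Qᴴ * A * Q) * (Qᴴ * B * Q) = Qᴴ * A * (Q * Qᴴ) * B * Q := by
          simp only [Matrix.mul_assoc]
      _ = _ := by rw [h2]; simp only [Matrix.mul_assoc, Matrix.one_mul]
  have htr : ∀ A : Matrix m m ℂ, (Qᴴ * A * Q).trace = A.trace := by
    intro A
    rw [Matrix.trace_mul_comm, ← Matrix.mul_assoc, h2, Matrix.one_mul]
  have h4 : (Qᴴ * Tᴴ * Q)ᵀ = Qᴴ * Tᴴ * Q := by
    have e : Qᴴ * Tᴴ * Q = (Qᴴ * T * Q)ᴴ := by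
      simp [Matrix.conjTranspose_mul, Matrix.mul_assoc]
    rw [e, Matrix.conjTranspose, h3, ← Matrix.transpose_map, h3]
  rw [← htr (T * T * Tᴴ * T * Tᴴ * Tᴴ), ← htr (Tᴴ * Tᴴ * T * Tᴴ * T * T)]
  simp only [← hmul]
  generalize Qᴴ * T * Q = S at *
  generalize Qᴴ * Tᴴ * Q = R at *
  rw [← Matrix.trace_transpose]
  simp only [Matrix.transpose_mul, h3, h4, Matrix.mul_assoc]

/-- The 4 × 4 matrix from Example 5 is not UECSM, even though it passes the
Angle, Grammian, and Parallelepiped tests. -/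
theorem not_UECSM_4x4_example :
    ¬ UECSM !![(5 : ℂ), 0, -1, 3; 2, 4, 1, 2; 2, -2, 6, -2; 0, -2, 1, 4] := by
  rintro ⟨Q, -, h2, h3⟩
  have h := trace_word_of_symm _ Q h2 h3
  have hA : !![(5 : ℂ), 0, -1, 3; 2, 4, 1, 2; 2, -2, 6, -2; 0, -2, 1, 4] =
      (Int.castRingHom ℂ).mapMatrix !![5, 0, -1, 3; 2, 4, 1, 2; 2, -2, 6, -2; 0, -2, 1, 4] := by
    ext i j
    fin_cases i <;> fin_cases j <;> simp
  have hT : (!![(5 : ℂ), 0, -1, 3; 2, 4, 1, 2; 2, -2, 6, -2; 0, -2, 1, 4])ᴴ =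
      (Int.castRingHom ℂ).mapMatrix !![5, 2, 2, 0; 0, 4, -2, -2; -1, 1, 6, 1; 3, 2, -2, 4] := by
    ext i j
    fin_cases i <;> fin_cases j <;> simp [Matrix.conjTranspose_apply]
  rw [hT, hA] at h
  simp only [← map_mul] at h
  simp only [RingHom.mapMatrix_apply, ← AddMonoidHom.map_trace] at h
  have h' := (Int.castRingHom ℂ).injective_int h
  revert h'
  decide +kernel
end
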